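/- arXiv:2307.12720 — 4 statements merged into one kernel-verified Lean document; each statement's English description precedes it below -/
import Mathlib

section
/- Let N8₀(m) denote the number of OT-admissible words of length m whose leftmost symbol equals 0. For every m ≥ 3, one has N8₀(m) = 4·N8₀(m−1) + (3/2)·N8(m−2). -/
namespace OTLOCO

def B1 : Finset (Fin 8) := {0, 1, 4, 5}
def B2 : Finset (Fin 8) := {2, 3, 6, 7}

def OTpair (a b : Fin 8) : Prop :=
  (a = 2 ∧ b ∈ B1) ∨ (a ∈ B1 ∧ b = 2) ∨ (a = 5 ∧ b ∈ B2) ∨ (a ∈ B2 ∧ b = 5)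

def OTtriple (a x b : Fin 8) : Prop :=
  (a ∈ ({0, 1, 4} : Finset (Fin 8)) ∧ x ∈ ({3, 6} : Finset (Fin 8)) ∧
    b ∈ ({0, 1, 4} : Finset (Fin 8))) ∨
  (a ∈ ({3, 6, 7} : Finset (Fin 8)) ∧ x ∈ ({1, 4} : Finset (Fin 8)) ∧
    b ∈ ({3, 6, 7} : Finset (Fin 8)))

instance (a b : Fin 8) : Decidable (OTpair a b) := by unfold OTpair; infer_instance
instance (a x b : Fin 8) : Decidable (OTtriple a x b) := by unfold OTtriple; infer_instance

/-- A word `w : Fin m → Fin 8` (index `0` is the leftmost symbol) is OT-admissible. -/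
def OTadm {m : ℕ} (w : Fin m → Fin 8) : Prop :=
  (∀ i j : Fin m, (j : ℕ) = (i : ℕ) + 1 → ¬ OTpair (w i) (w j)) ∧
  (∀ i j k : Fin m, (j : ℕ) = (i : ℕ) + 1 → (k : ℕ) = (i : ℕ) + 2 →
    ¬ OTtriple (w i) (w j) (w k))

instance {m : ℕ} : DecidablePred (@OTadm m) := fun w => by
  unfold OTadm; infer_instance

/-- Number of OT-admissible words of length `m`, with the convention `N8 0 = 2`. -/
def N8 (m : ℕ) : ℕ :=
  if m = 0 then 2
  else (Finset.univ.filter (fun w : Fin m → Fin 8 => OTadm w)).card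

/-- Number of OT-admissible words of length `m` whose leftmost symbol is `0`. -/
def N80 (m : ℕ) : ℕ :=
  (Finset.univ.filter (fun w : Fin m → Fin 8 =>
    OTadm w ∧ ∀ i : Fin m, (i : ℕ) = 0 → w i = 0)).card

/-! Write `c n a` for `numStarting n a`, the number of admissible words consisting of `a` followed
by `n` symbols. Consider the second symbol of an admissible word that starts with `0`.
Before `0`, `1`, `4`, `5` or `7` the leading `0` can be dropped, as it constrains nothing further.
After `0 3` or `0 6` the next symbol lies in `B2`, and then the first two symbols can be dropped.
The pair `0 2` is forbidden. Thus `c (n+2) 0` is the sum of `c (n+1) b` over `b ∈ {0, 1, 4, 5, 7}`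
plus twice the sum of `c n b` over `b ∈ B2`.

The reversal `ℓ ↦ 7 - ℓ` of the levels preserves the forbidden set and exchanges `B1` with `B2`, so
each of them accounts for half of all admissible words. It gives `c n 7 = c n 0`; moreover `0`, `1`
and `4` restrict what follows in the same way, so `c n 1 = c n 4 = c n 0`. Finally `5` may be
followed exactly by the symbols of `B1`, whence `c (n+1) 5` is half the number of admissible words
of length `n+1`. -/

open Finset Matrix

theorem card_filter_vecCons {α : Type*} [Fintype α] {n : ℕ} (p : (Fin (n + 1) → α) → Prop)
    [DecidablePred p] :
    #{w | p w} = ∑ a, #{w : Fin n → α | p (vecCons a w)} := by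
  simp only [card_filter]
  rw [← Fintype.sum_prod_type']
  exact ((Fin.consEquiv fun _ => α).sum_comp _).symm

section Admissibility

variable {n : ℕ} {a b x : Fin 8}

theorem OTadm_vecCons_iff (w : Fin n → Fin 8) :
    OTadm (vecCons a w) ↔
      (∀ i : Fin n, (i : ℕ) = 0 → ¬ OTpair a (w i)) ∧
      (∀ i j : Fin n, (i : ℕ) = 0 → (j : ℕ) = 1 → ¬ OTtriple a (w i) (w j)) ∧
      OTadm w := by
  simp [OTadm, Fin.forall_fin_succ, add_assoc, and_assoc, and_left_comm]

theorem OTadm_vecCons_vecCons_iff (w : Fin n → Fin 8) :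
    OTadm (vecCons a (vecCons b w)) ↔
      ¬ OTpair a b ∧ (∀ i : Fin n, (i : ℕ) = 0 → ¬ OTtriple a b (w i)) ∧
      OTadm (vecCons b w) := by
  simp [OTadm_vecCons_iff (vecCons b w), Fin.forall_fin_succ]

theorem OTadm_vecCons_congr (hpair : ∀ c, OTpair a c ↔ OTpair b c)
    (htriple : ∀ c d, OTtriple a c d ↔ OTtriple b c d) (w : Fin n → Fin 8) :
    OTadm (vecCons a w) ↔ OTadm (vecCons b w) := by
  simp only [OTadm_vecCons_iff, hpair, htriple]

theorem OTadm_vecCons_vecCons_of_free (hpair : ¬ OTpair a b) (htriple : ∀ c, ¬ OTtriple a b c)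
    (w : Fin n → Fin 8) :
    OTadm (vecCons a (vecCons b w)) ↔ OTadm (vecCons b w) := by
  simp [OTadm_vecCons_vecCons_iff, hpair, htriple]

theorem OTadm_five_vecCons_iff (w : Fin n → Fin 8) :
    OTadm (vecCons 5 (vecCons b w)) ↔ b ∈ B1 ∧ OTadm (vecCons b w) := by
  have pair_iff : ∀ b, ¬ OTpair 5 b ↔ b ∈ B1 := by decide
  have no_triple : ∀ b c, ¬ OTtriple 5 b c := by decide
  simp [OTadm_vecCons_vecCons_iff, pair_iff, no_triple]

theorem OTadm_zero_vecCons_vecCons_iff (hx : x = 3 ∨ x = 6) (w : Fin n → Fin 8) :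
    OTadm (vecCons 0 (vecCons x (vecCons b w))) ↔ b ∈ B2 ∧ OTadm (vecCons b w) := by
  have pair_free : ∀ x : Fin 8, x = 3 ∨ x = 6 → ¬ OTpair 0 x := by decide
  have allowed_iff : ∀ x b : Fin 8, x = 3 ∨ x = 6 →
      (¬ OTtriple 0 x b ∧ ¬ OTpair x b ↔ b ∈ B2) := by decide
  have no_triple : ∀ x b c : Fin 8, x = 3 ∨ x = 6 → b ∈ B2 → ¬ OTtriple x b c := by decide
  calc OTadm (vecCons 0 (vecCons x (vecCons b w)))
      ↔ ¬ OTtriple 0 x b ∧ OTadm (vecCons x (vecCons b w)) := by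
        simp [OTadm_vecCons_vecCons_iff (a := 0), pair_free x hx]
    _ ↔ (¬ OTtriple 0 x b ∧ ¬ OTpair x b) ∧
          (∀ i : Fin n, (i : ℕ) = 0 → ¬ OTtriple x b (w i)) ∧ OTadm (vecCons b w) := by
        rw [OTadm_vecCons_vecCons_iff, and_assoc]
    _ ↔ b ∈ B2 ∧ OTadm (vecCons b w) := by
        rw [allowed_iff x b hx]
        exact and_congr_right fun hb => and_iff_right fun i _ => no_triple x b (w i) hx hb

theorem OTpair_rev : ∀ a b : Fin 8, OTpair a.rev b.rev ↔ OTpair a b := by decide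

theorem OTtriple_rev : ∀ a b c : Fin 8, OTtriple a.rev b.rev c.rev ↔ OTtriple a b c := by decide

theorem OTadm_rev_comp (w : Fin n → Fin 8) : OTadm (Fin.rev ∘ w) ↔ OTadm w := by
  simp only [OTadm, Function.comp_apply, OTpair_rev, OTtriple_rev]

end Admissibility

section Counting

variable {a b x : Fin 8}

/-- The number of OT-admissible words with leftmost symbol `a`, indexed by the number `n` of
symbols after `a`, so that the words have length `n + 1`. -/
def numStarting (n : ℕ) (a : Fin 8) : ℕ :=
  #{w : Fin n → Fin 8 | OTadm (vecCons a w)}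

theorem N8_succ (n : ℕ) : N8 (n + 1) = ∑ a, numStarting n a := by
  rw [N8, if_neg n.succ_ne_zero, card_filter_vecCons]
  rfl

theorem N80_succ (n : ℕ) : N80 (n + 1) = numStarting n 0 := by
  rw [N80, card_filter_vecCons, sum_eq_single 0]
  · simp [numStarting]
  · intro a _ ha
    simp [ha]
  · simp

theorem numStarting_succ (n : ℕ) (a : Fin 8) :
    numStarting (n + 1) a =
      ∑ b, #{w : Fin n → Fin 8 | OTadm (vecCons a (vecCons b w))} :=
  card_filter_vecCons _

theorem sum_card_mem_and_OTadm (S : Finset (Fin 8)) (n : ℕ) :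
    ∑ b, #{w : Fin n → Fin 8 | b ∈ S ∧ OTadm (vecCons b w)} = ∑ b ∈ S, numStarting n b := by
  simp only [numStarting, card_filter, ite_and, sum_ite_irrel, sum_const_zero, sum_ite_mem,
    univ_inter]

theorem numStarting_rev (n : ℕ) (a : Fin 8) : numStarting n a.rev = numStarting n a := by
  refine card_equiv ((Equiv.refl _).arrowCongr Fin.revPerm) fun w => ?_
  have rev_comp_vecCons : Fin.rev ∘ vecCons a.rev w = vecCons a (Fin.rev ∘ w) := by
    rw [vecCons, Fin.comp_cons, Fin.rev_rev, vecCons]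
  simp only [mem_filter_univ]
  rw [← OTadm_rev_comp, rev_comp_vecCons]
  rfl

theorem sum_B2_numStarting (n : ℕ) :
    ∑ b ∈ B2, numStarting n b = ∑ b ∈ B1, numStarting n b := by
  rw [show B2 = B1.map Fin.revPerm.toEmbedding by decide, sum_map]
  simp [numStarting_rev]

theorem N8_succ_eq_two_mul (n : ℕ) : N8 (n + 1) = 2 * ∑ b ∈ B1, numStarting n b := by
  rw [N8_succ, show (univ : Finset (Fin 8)) = B1 ∪ B2 by decide, sum_union (by decide),
    sum_B2_numStarting, two_mul]

theorem numStarting_congr (hpair : ∀ c, OTpair a c ↔ OTpair b c)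
    (htriple : ∀ c d, OTtriple a c d ↔ OTtriple b c d) (n : ℕ) :
    numStarting n a = numStarting n b := by
  simp only [numStarting, OTadm_vecCons_congr hpair htriple]

theorem numStarting_succ_five (n : ℕ) :
    numStarting (n + 1) 5 = ∑ b ∈ B1, numStarting n b := by
  simp only [numStarting_succ, OTadm_five_vecCons_iff, sum_card_mem_and_OTadm]

theorem card_OTadm_zero_vecCons_of_three_or_six (hx : x = 3 ∨ x = 6) (n : ℕ) :
    #{w : Fin (n + 1) → Fin 8 | OTadm (vecCons 0 (vecCons x w))} =
      ∑ b ∈ B2, numStarting n b := by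
  simp only [card_filter_vecCons, OTadm_zero_vecCons_vecCons_iff hx, sum_card_mem_and_OTadm]

theorem numStarting_add_two_zero_eq_sum (n : ℕ) :
    numStarting (n + 2) 0 = ∑ b ∈ {0, 1, 4, 5, 7}, numStarting (n + 1) b +
      2 * ∑ b ∈ B2, numStarting n b := by
  have free : ∀ b ∈ ({0, 1, 4, 5, 7} : Finset (Fin 8)), ¬ OTpair 0 b ∧ ∀ c, ¬ OTtriple 0 b c := by
    decide
  have card_of_free (b) (hb : b ∈ ({0, 1, 4, 5, 7} : Finset (Fin 8))) :
      #{w : Fin (n + 1) → Fin 8 | OTadm (vecCons 0 (vecCons b w))} = numStarting (n + 1) b := by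
    simp only [numStarting, OTadm_vecCons_vecCons_of_free (free b hb).1 (free b hb).2]
  have card_two : #{w : Fin (n + 1) → Fin 8 | OTadm (vecCons 0 (vecCons 2 w))} = 0 := by
    simp [OTadm_vecCons_vecCons_iff, show OTpair 0 2 by decide]
  rw [numStarting_succ, show (univ : Finset (Fin 8)) = {0, 1, 4, 5, 7} ∪ {2, 3, 6} by decide,
    sum_union (by decide), sum_congr rfl card_of_free]
  simp [card_two, card_OTadm_zero_vecCons_of_three_or_six, two_mul]

theorem numStarting_add_two_zero (n : ℕ) :
    numStarting (n + 2) 0 =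
      4 * numStarting (n + 1) 0 + 3 * ∑ b ∈ B1, numStarting n b := by
  have one_eq : numStarting (n + 1) 1 = numStarting (n + 1) 0 :=
    numStarting_congr (by decide) (by decide) _
  have four_eq : numStarting (n + 1) 4 = numStarting (n + 1) 0 :=
    numStarting_congr (by decide) (by decide) _
  have seven_eq : numStarting (n + 1) 7 = numStarting (n + 1) 0 := numStarting_rev _ 0
  have sum_eq : ∑ b ∈ {0, 1, 4, 5, 7}, numStarting (n + 1) b =
      4 * numStarting (n + 1) 0 + numStarting (n + 1) 5 := by
    rw [sum_insert (by decide), sum_insert (by decide), sum_insert (by decide),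
      sum_insert (by decide), sum_singleton, one_eq, four_eq, seven_eq]
    ring
  rw [numStarting_add_two_zero_eq_sum, sum_eq, sum_B2_numStarting, numStarting_succ_five]
  ring

end Counting

theorem N80_recursion (m : ℕ) (hm : 3 ≤ m) :
    (N80 m : ℚ) = 4 * (N80 (m - 1) : ℚ) + (3 / 2) * (N8 (m - 2) : ℚ) := by
  obtain ⟨n, rfl⟩ := Nat.exists_eq_add_of_le' hm
  change (N80 (n + 2 + 1) : ℚ) = 4 * N80 (n + 1 + 1) + 3 / 2 * N8 (n + 1)
  rw [N80_succ, N80_succ, N8_succ_eq_two_mul, numStarting_add_two_zero]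
  push_cast
  ring

end OTLOCO
end

section
/- Let N8₀(m) denote the number of OT-admissible words of length m whose leftmost symbol equals 0. For every m ≥ 2, one has N8₀(m) = (N8(m) − N8(m−1))/6. -/
/-!
Sort the admissible words of length `m` by their first symbol. The symbols `0`, `1`, `4` can replace
one another in first position without affecting admissibility, and the symmetry of the forbidden set
exchanging the two blocks carries them to `7`, `3`, `6`, so all six start equally many words. No
forbidden triple starts with `2` or `5`, and any symbol may follow exactly one of these two, so
deleting the first symbol matches the words starting with `2` or `5` with all admissible words of
length `m - 1`. Hence `N8 m = 6 * N80 m + N8 (m - 1)`.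
-/

namespace OTLOCO

section ForbiddenFactors

variable {α : Type*} (P : α → α → Prop) (T : α → α → α → Prop)

/-- The words of length `m` containing no two consecutive symbols related by `P` and no three
consecutive symbols related by `T`. It is stated in the shape of `OTadm`, so that `OTadm` is
definitionally membership in it. -/
def avoidingWords (m : ℕ) : Set (Fin m → α) :=
  {w | (∀ i j : Fin m, (j : ℕ) = (i : ℕ) + 1 → ¬ P (w i) (w j)) ∧
    ∀ i j k : Fin m, (j : ℕ) = (i : ℕ) + 1 → (k : ℕ) = (i : ℕ) + 2 → ¬ T (w i) (w j) (w k)}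

/-- The avoiding words of length `n + 1` whose first symbol is `a`; their numbers, as `a` varies,
are the quantities compared in the proof. -/
def avoidingWordsFrom (n : ℕ) (a : α) : Set (Fin (n + 1) → α) :=
  {w ∈ avoidingWords P T (n + 1) | w 0 = a}

/-- The symbol `a` can be put in front of the word `v` without creating a forbidden factor at the
front. The triple condition is vacuous when `v` has length one. -/
def CanPrecede {n : ℕ} (a : α) (v : Fin (n + 1) → α) : Prop :=
  ¬ P a (v 0) ∧ ∀ j : Fin (n + 1), (j : ℕ) = 1 → ¬ T a (v 0) (v j)

variable {P T}

lemma cons_mem_avoidingWords_iff {n : ℕ} {a : α} {v : Fin (n + 1) → α} :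
    (Fin.cons a v : Fin (n + 2) → α) ∈ avoidingWords P T (n + 2) ↔
      v ∈ avoidingWords P T (n + 1) ∧ CanPrecede P T a v := by
  let w : Fin (n + 2) → α := Fin.cons a v
  have pairs_iff : (∀ i j : Fin (n + 2), (j : ℕ) = i + 1 → ¬ P (w i) (w j)) ↔
      ¬ P a (v 0) ∧ ∀ i j : Fin (n + 1), (j : ℕ) = i + 1 → ¬ P (v i) (v j) := by
    simp [w, Fin.forall_iff_succ (n := n + 1)]
  have triples_iff : (∀ i j k : Fin (n + 2), (j : ℕ) = i + 1 → (k : ℕ) = i + 2 →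
      ¬ T (w i) (w j) (w k)) ↔ (∀ k : Fin (n + 1), (k : ℕ) = 1 → ¬ T a (v 0) (v k)) ∧
        ∀ i j k : Fin (n + 1), (j : ℕ) = i + 1 → (k : ℕ) = i + 2 → ¬ T (v i) (v j) (v k) := by
    simp [w, Fin.forall_iff_succ (n := n + 1), @forall_comm (Fin (n + 1)) (_ = _)]
  exact (and_congr pairs_iff triples_iff).trans (and_and_and_comm.trans and_comm)

lemma comp_mem_avoidingWords_iff {β : Type*} {Q : β → β → Prop} {U : β → β → β → Prop} {f : α → β}
    (hP : ∀ a b, Q (f a) (f b) ↔ P a b) (hT : ∀ a b c, U (f a) (f b) (f c) ↔ T a b c)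
    {m : ℕ} {w : Fin m → α} :
    f ∘ w ∈ avoidingWords Q U m ↔ w ∈ avoidingWords P T m := by
  simp [avoidingWords, hP, hT]

lemma ncard_avoidingWords_succ [Fintype α] (n : ℕ) :
    (avoidingWords P T (n + 1)).ncard = ∑ a, (avoidingWordsFrom P T n a).ncard := by
  classical
  simp only [avoidingWordsFrom, Set.ncard_eq_toFinset_card']
  rw [Finset.card_eq_sum_card_fiberwise (f := fun w ↦ w 0) (t := Finset.univ) (by simp)]
  congr! 2
  ext; simp

lemma ncard_avoidingWordsFrom_equiv {β : Type*} {Q : β → β → Prop} {U : β → β → β → Prop}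
    (e : α ≃ β) (hP : ∀ a b, Q (e a) (e b) ↔ P a b)
    (hT : ∀ a b c, U (e a) (e b) (e c) ↔ T a b c) (n : ℕ) (a : α) :
    (avoidingWordsFrom Q U n (e a)).ncard = (avoidingWordsFrom P T n a).ncard := by
  symm
  refine Nat.card_congr (((Equiv.refl _).arrowCongr e).subtypeEquiv fun w ↦ ?_)
  exact and_congr (comp_mem_avoidingWords_iff hP hT).symm e.apply_eq_iff_eq.symm

lemma avoidingWordsFrom_succ (n : ℕ) (a : α) :
    avoidingWordsFrom P T (n + 1) a =
      Fin.cons (α := fun _ ↦ α) a '' {v ∈ avoidingWords P T (n + 1) | CanPrecede P T a v} := by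
  ext w
  constructor
  · rintro ⟨hw, rfl⟩
    rw [← Fin.cons_self_tail w] at hw
    exact ⟨Fin.tail w, cons_mem_avoidingWords_iff.1 hw, Fin.cons_self_tail w⟩
  · rintro ⟨v, hv, rfl⟩
    exact ⟨cons_mem_avoidingWords_iff.2 hv, rfl⟩

lemma ncard_avoidingWordsFrom_succ (n : ℕ) (a : α) :
    (avoidingWordsFrom P T (n + 1) a).ncard =
      {v ∈ avoidingWords P T (n + 1) | CanPrecede P T a v}.ncard := by
  rw [avoidingWordsFrom_succ]
  exact Set.ncard_image_of_injective _ (Fin.cons_right_injective (α := fun _ ↦ α) a)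

lemma ncard_avoidingWordsFrom_succ_congr {a b : α} (hP : ∀ x, P a x ↔ P b x)
    (hT : ∀ x y, T a x y ↔ T b x y) (n : ℕ) :
    (avoidingWordsFrom P T (n + 1) a).ncard = (avoidingWordsFrom P T (n + 1) b).ncard := by
  have canPrecede_iff (v : Fin (n + 1) → α) : CanPrecede P T a v ↔ CanPrecede P T b v := by
    simp only [CanPrecede, hP, hT]
  simp only [ncard_avoidingWordsFrom_succ, canPrecede_iff]

lemma ncard_avoidingWordsFrom_succ_add [Finite α] {a b : α} (hP : ∀ x, P b x ↔ ¬ P a x)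
    (ha : ∀ x y, ¬ T a x y) (hb : ∀ x y, ¬ T b x y) (n : ℕ) :
    (avoidingWordsFrom P T (n + 1) a).ncard + (avoidingWordsFrom P T (n + 1) b).ncard =
      (avoidingWords P T (n + 1)).ncard := by
  have canPrecede_a (v : Fin (n + 1) → α) : CanPrecede P T a v ↔ ¬ P a (v 0) := by
    simp [CanPrecede, ha]
  have canPrecede_b (v : Fin (n + 1) → α) : CanPrecede P T b v ↔ ¬ ¬ P a (v 0) := by
    simp [CanPrecede, hb, hP]
  simp only [ncard_avoidingWordsFrom_succ, canPrecede_a, canPrecede_b]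
  exact Set.ncard_inter_add_ncard_sdiff_eq_ncard (avoidingWords P T (n + 1)) {v | ¬ P a (v 0)}

end ForbiddenFactors

lemma N8_succ_s6 (n : ℕ) : N8 (n + 1) = (avoidingWords OTpair OTtriple (n + 1)).ncard := by
  rw [N8, if_neg n.succ_ne_zero, ← Set.ncard_coe_finset, Finset.coe_filter_univ]
  rfl

lemma N80_succ_s6 (n : ℕ) : N80 (n + 1) = (avoidingWordsFrom OTpair OTtriple n 0).ncard := by
  simp only [N80, Fin.val_eq_zero_iff, forall_eq, ← Set.ncard_coe_finset, Finset.coe_filter_univ]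
  rfl

open Equiv in
/-- The symmetry of the forbidden set that exchanges the two blocks `B1` and `B2`. -/
def blockSwap : Perm (Fin 8) := swap 0 7 * swap 1 3 * swap 2 5 * swap 4 6

lemma OTpair_blockSwap_iff : ∀ a b, OTpair (blockSwap a) (blockSwap b) ↔ OTpair a b := by
  decide

lemma OTtriple_blockSwap_iff :
    ∀ a x b, OTtriple (blockSwap a) (blockSwap x) (blockSwap b) ↔ OTtriple a x b := by
  decide

lemma ncard_avoidingWordsFrom_eq_of_ne {a : Fin 8} (ha2 : a ≠ 2) (ha5 : a ≠ 5) (n : ℕ) :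
    (avoidingWordsFrom OTpair OTtriple (n + 1) a).ncard =
      (avoidingWordsFrom OTpair OTtriple (n + 1) 0).ncard := by
  have one_eq := ncard_avoidingWordsFrom_succ_congr (P := OTpair) (T := OTtriple) (a := 1) (b := 0)
    (by decide) (by decide) n
  have four_eq := ncard_avoidingWordsFrom_succ_congr (P := OTpair) (T := OTtriple) (a := 4) (b := 0)
    (by decide) (by decide) n
  have blockSwap_eq := ncard_avoidingWordsFrom_equiv blockSwap OTpair_blockSwap_iff
    OTtriple_blockSwap_iff (n + 1)
  fin_cases a
  · rfl
  · exact one_eq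
  · exact absurd rfl ha2
  · exact (blockSwap_eq 1).trans one_eq
  · exact four_eq
  · exact absurd rfl ha5
  · exact (blockSwap_eq 4).trans four_eq
  · exact blockSwap_eq 0

lemma ncard_avoidingWordsFrom_two_add_five (n : ℕ) :
    (avoidingWordsFrom OTpair OTtriple (n + 1) 2).ncard +
      (avoidingWordsFrom OTpair OTtriple (n + 1) 5).ncard = N8 (n + 1) := by
  rw [N8_succ_s6]
  exact ncard_avoidingWordsFrom_succ_add (by decide) (by decide) (by decide) n

lemma N8_add_two (n : ℕ) : N8 (n + 2) = 6 * N80 (n + 2) + N8 (n + 1) := by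
  have start_eq (a : Fin 8) (ha : a ≠ 2 ∧ a ≠ 5) := ncard_avoidingWordsFrom_eq_of_ne ha.1 ha.2 n
  rw [N8_succ_s6, ncard_avoidingWords_succ, Fin.sum_univ_eight, N80_succ_s6,
    ← ncard_avoidingWordsFrom_two_add_five, start_eq 1 (by decide), start_eq 3 (by decide),
    start_eq 4 (by decide), start_eq 6 (by decide), start_eq 7 (by decide)]
  ring

theorem N80_eq (m : ℕ) (hm : 2 ≤ m) :
    (N80 m : ℚ) = ((N8 m : ℚ) - (N8 (m - 1) : ℚ)) / 6 := by
  obtain ⟨n, rfl⟩ := Nat.exists_eq_add_of_le' hm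
  rw [Nat.add_sub_assoc one_le_two, N8_add_two]
  push_cast
  ring

end OTLOCO
end

section
/- The exponential growth rate of the number of OT-admissible words equals the capacity of the OT constraint: lim_{m→∞} (log₂ N8(m))/m = log₂((5 + 3√5)/2), where (5 + 3√5)/2 is the largest root of x² − 5x − 5. -/
/-!
Among the pairs of consecutive letters of an admissible word, call confined those that can be
extended to the left by only four letters; all others can be extended by seven. Of the pairs
created by such an extension, four are free and three confined if the old pair was free, and three
are free and one confined if it was confined. If `l² = 5 l + 5`, then `(3, l - 4)` is an eigenvector
of the matrix `!![4, 3; 3, 1]` for `l`, so giving an admissible word the weight `3` or `l - 4`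
according to its first two letters makes the total weight grow by exactly the factor `l` per letter.
For `l > 4` the weights are positive, so the number of admissible words is of order `l ^ m`.
-/

namespace OTLOCO

section GrowthRate

open Asymptotics Filter

theorem isTheta_card_sum {ι κ : Type*} [Finite κ] {β : ι → Type*} {L : Filter ι}
    (s : ∀ i, Finset (β i)) (c : ∀ i, β i → κ) {v : κ → ℝ}
    (hpos : ∀ i, ∀ b ∈ s i, 0 < v (c i b)) :
    (fun i => ((s i).card : ℝ)) =Θ[L] fun i => ∑ b ∈ s i, v (c i b) := by
  obtain ⟨C, hC⟩ := (Set.finite_range fun k => (v k)⁻¹).bddAbove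
  obtain ⟨M, hM⟩ := (Set.finite_range v).bddAbove
  have hsum (i : ι) : 0 ≤ ∑ b ∈ s i, v (c i b) := Finset.sum_nonneg fun b hb => (hpos i b hb).le
  refine ⟨.of_bound C (.of_forall fun i => ?_), .of_bound M (.of_forall fun i => ?_)⟩ <;>
    rw [Real.norm_of_nonneg (hsum i), RCLike.norm_natCast]
  · rw [Finset.mul_sum, Finset.cast_card]
    exact Finset.sum_le_sum fun b hb =>
      (inv_le_iff_one_le_mul₀ (hpos i b hb)).1 (hC ⟨c i b, rfl⟩)
  · rw [mul_comm, ← nsmul_eq_mul]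
    exact Finset.sum_le_card_nsmul _ _ _ fun b _ => hM ⟨c i b, rfl⟩

theorem log_le_log_add_log_of_abs_le {x y C : ℝ} (hx : x ≠ 0) (h : |x| ≤ C * |y|) :
    Real.log x ≤ Real.log C + Real.log y := by
  have hCy : C * |y| ≠ 0 := ((abs_pos.2 hx).trans_le h).ne'
  have hlog := Real.log_le_log (abs_pos.2 hx) h
  rwa [Real.log_mul (left_ne_zero_of_mul hCy) (right_ne_zero_of_mul hCy), Real.log_abs,
    Real.log_abs] at hlog

theorem isBigO_log_sub_log_one {ι : Type*} {L : Filter ι} {f g : ι → ℝ} (h : f =Θ[L] g) :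
    (fun i => Real.log (f i) - Real.log (g i)) =O[L] fun _ => (1 : ℝ) := by
  obtain ⟨C, hfg⟩ := h.1.bound
  obtain ⟨D, hgf⟩ := h.2.bound
  refine IsBigO.of_bound (|Real.log C| + |Real.log D|) ?_
  filter_upwards [hfg, hgf, h.eq_zero_iff] with i hfi hgi hzero
  rw [norm_one, mul_one]
  by_cases hg : g i = 0
  · rw [hzero.2 hg, hg, sub_self, norm_zero]
    positivity
  · have upper := log_le_log_add_log_of_abs_le (mt hzero.1 hg) hfi
    have lower := log_le_log_add_log_of_abs_le hg hgi
    rw [Real.norm_eq_abs, abs_le]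
    constructor <;>
      linarith [le_abs_self (Real.log C), le_abs_self (Real.log D), abs_nonneg (Real.log C),
        abs_nonneg (Real.log D)]

theorem tendsto_logb_div_of_isTheta_pow {u : ℕ → ℝ} {l : ℝ} (b : ℝ)
    (h : u =Θ[atTop] fun n => l ^ n) :
    Tendsto (fun n : ℕ => Real.logb b (u n) / n) atTop (nhds (Real.logb b l)) := by
  have hlog : Tendsto (fun n : ℕ => (Real.log (u n) - Real.log (l ^ n)) / n) atTop (nhds 0) :=
    ((isBigO_log_sub_log_one h).trans_isLittleO
      (isLittleO_const_left.2 (.inr (tendsto_norm_atTop_atTop.comp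
        tendsto_natCast_atTop_atTop)))).tendsto_div_nhds_zero
  have hlogb := (hlog.div_const (Real.log b)).add_const (Real.logb b l)
  rw [zero_div, zero_add] at hlogb
  refine hlogb.congr' ?_
  filter_upwards [eventually_ne_atTop 0] with n hn
  have hn' : (n : ℝ) ≠ 0 := Nat.cast_ne_zero.2 hn
  rw [Real.log_pow, sub_div, mul_div_cancel_left₀ _ hn', sub_div, Real.logb, Real.logb,
    sub_add_cancel, div_right_comm]

end GrowthRate

section Avoidance

variable {α : Type*} {P : α → α → Prop} {T : α → α → α → Prop}

/-- The word `w` avoids the forbidden factors of length two given by `P` and of length three given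
by `T`; the form matches that of `OTadm`. -/
def Avoids (P : α → α → Prop) (T : α → α → α → Prop) {n : ℕ} (w : Fin n → α) : Prop :=
  (∀ i j : Fin n, (j : ℕ) = (i : ℕ) + 1 → ¬ P (w i) (w j)) ∧
  (∀ i j k : Fin n, (j : ℕ) = (i : ℕ) + 1 → (k : ℕ) = (i : ℕ) + 2 → ¬ T (w i) (w j) (w k))

instance [DecidableRel P] [∀ a x y, Decidable (T a x y)] {n : ℕ} :
    DecidablePred (Avoids P T (n := n)) := fun w => by
  unfold Avoids; infer_instance

theorem avoids_two_iff {w : Fin 2 → α} : Avoids P T w ↔ ¬ P (w 0) (w 1) := by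
  simp [Avoids, Fin.forall_fin_two]

theorem avoids_cons_iff {n : ℕ} {a : α} {w : Fin (n + 2) → α} :
    Avoids P T (Fin.cons a w : Fin (n + 3) → α) ↔
      Avoids P T w ∧ ¬ P a (w 0) ∧ ¬ T a (w 0) (w 1) := by
  constructor
  · rintro ⟨hP, hT⟩
    exact ⟨⟨fun i j hj => hP i.succ j.succ (by simp [hj]),
      fun i j k hj hk => hT i.succ j.succ k.succ (by simp [hj]) (by simp [hk])⟩,
      hP 0 1 rfl, hT 0 1 2 rfl rfl⟩
  · rintro ⟨⟨hP, hT⟩, hP₀, hT₀⟩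
    constructor
    · intro i j hj
      obtain ⟨j, rfl⟩ := Fin.exists_succ_eq.2 (show j ≠ 0 by rintro rfl; simp at hj)
      cases i using Fin.cases with
      | zero =>
        obtain rfl : j = 0 := by ext; simpa using hj
        exact hP₀
      | succ i => exact hP i j (by simpa using hj)
    · intro i j k hj hk
      obtain ⟨j, rfl⟩ := Fin.exists_succ_eq.2 (show j ≠ 0 by rintro rfl; simp at hj)
      obtain ⟨k, rfl⟩ := Fin.exists_succ_eq.2 (show k ≠ 0 by rintro rfl; simp at hk)
      cases i using Fin.cases with
      | zero =>
        obtain rfl : j = 0 := by ext; simpa using hj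
        obtain rfl : k = 1 := by ext; simpa using hk
        exact hT₀
      | succ i => exact hT i j k (by simpa using hj) (by simp at hk; omega)

variable [Fintype α] [DecidableRel P] [∀ a x y, Decidable (T a x y)]

theorem sum_avoids_succ {M : Type*} [AddCommMonoid M] {n : ℕ} (f : (Fin (n + 3) → α) → M) :
    ∑ w with Avoids P T w, f w =
      ∑ w : Fin (n + 2) → α with Avoids P T w,
        ∑ a with ¬ P a (w 0) ∧ ¬ T a (w 0) (w 1), f (Fin.cons a w) := by
  simp only [Finset.sum_filter]
  rw [← (Fin.consEquiv fun _ => α).sum_comp, Fintype.sum_prod_type_right]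
  refine Finset.sum_congr rfl fun w _ => ?_
  have hcons (a : α) : Fin.consEquiv (fun _ => α) (a, w) = Fin.cons a w := rfl
  by_cases hw : Avoids P T w <;> simp [hcons, avoids_cons_iff, hw]

/-- The weight `v` on pairs of letters is an eigenvector, with eigenvalue `l`, of the operator that
sums over all admissible extensions of a pair to the left. -/
def IsEigenweight {R : Type*} [Semiring R] (P : α → α → Prop) (T : α → α → α → Prop)
    [DecidableRel P] [∀ a x y, Decidable (T a x y)] (v : α → α → R) (l : R) : Prop :=
  ∀ x y, ¬ P x y → ∑ a with ¬ P a x ∧ ¬ T a x y, v a x = l * v x y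

theorem IsEigenweight.sum_avoids {R : Type*} [Semiring R] {v : α → α → R} {l : R}
    (hv : IsEigenweight P T v l) (n : ℕ) :
    ∑ w : Fin (n + 2) → α with Avoids P T w, v (w 0) (w 1) =
      l ^ n * ∑ w : Fin 2 → α with Avoids P T w, v (w 0) (w 1) := by
  induction n with
  | zero => simp
  | succ n ih =>
    rw [sum_avoids_succ, pow_succ', mul_assoc, ← ih, Finset.mul_sum]
    refine Finset.sum_congr rfl fun w hw => ?_
    exact hv _ _ ((Finset.mem_filter.1 hw).2.1 0 1 rfl)

open Asymptotics Filter

theorem IsEigenweight.card_avoids_isTheta {v : α → α → ℝ} {l : ℝ} (hv : IsEigenweight P T v l)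
    (hl : l ≠ 0) (hpos : ∀ a x, ¬ P a x → 0 < v a x) (hne : ∃ a x, ¬ P a x) :
    (fun n => (Finset.card {w : Fin n → α | Avoids P T w} : ℝ)) =Θ[atTop] fun n => l ^ n := by
  have hcard : (fun n => (Finset.card {w : Fin (n + 2) → α | Avoids P T w} : ℝ)) =Θ[atTop]
      fun n => l ^ n * ∑ w : Fin 2 → α with Avoids P T w, v (w 0) (w 1) := by
    simp_rw [← hv.sum_avoids]
    exact isTheta_card_sum _ (fun n (w : Fin (n + 2) → α) => (w 0, w 1)) (v := fun p => v p.1 p.2)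
      fun n w hw => hpos _ _ ((Finset.mem_filter.1 hw).2.1 0 1 rfl)
  have hsum : ∑ w : Fin 2 → α with Avoids P T w, v (w 0) (w 1) ≠ 0 := by
    obtain ⟨a, x, hax⟩ := hne
    exact (Finset.sum_pos
      (fun w hw => hpos _ _ (avoids_two_iff.1 (Finset.mem_filter.1 hw).2))
      ⟨![a, x], by simpa [avoids_two_iff] using hax⟩).ne'
  have hshift : (fun n => (Finset.card {w : Fin (n + 2) → α | Avoids P T w} : ℝ)) =Θ[atTop]
      fun n => l ^ (n + 2) := by
    refine hcard.trans ?_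
    simp_rw [pow_add]
    exact (isTheta_refl _ _).mul (isTheta_const_const hsum (pow_ne_zero 2 hl))
  rw [← map_add_atTop_eq_nat 2]
  exact ⟨isBigO_map.2 hshift.1, isBigO_map.2 hshift.2⟩

end Avoidance

theorem N8_eq_card_avoids {m : ℕ} (hm : m ≠ 0) :
    N8 m = Finset.card {w : Fin m → Fin 8 | Avoids OTpair OTtriple w} :=
  if_neg hm

/-- Among the pairs allowed by `OTpair`, those with only four, instead of seven, admissible
extensions to the left. -/
def Confined (x y : Fin 8) : Prop :=
  x = 2 ∨ x = 5 ∨ ∃ a, OTtriple a x y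

instance (x y : Fin 8) : Decidable (Confined x y) := by unfold Confined; infer_instance

theorem card_free_left_extensions : ∀ x y : Fin 8, ¬ OTpair x y →
    Finset.card {a | (¬ OTpair a x ∧ ¬ OTtriple a x y) ∧ ¬ Confined a x} =
      if Confined x y then 3 else 4 := by
  decide

theorem card_confined_left_extensions : ∀ x y : Fin 8, ¬ OTpair x y →
    Finset.card {a | (¬ OTpair a x ∧ ¬ OTtriple a x y) ∧ Confined a x} =
      if Confined x y then 1 else 3 := by
  decide

/-- The eigenvector `(3, l - 4)` of `!![4, 3; 3, 1]`, as a weight on free and confined pairs. -/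
def otWeight {R : Type*} [Ring R] (l : R) (x y : Fin 8) : R :=
  if Confined x y then l - 4 else 3

theorem isEigenweight_otWeight {R : Type*} [CommRing R] {l : R} (hl : l ^ 2 - 5 * l - 5 = 0) :
    IsEigenweight OTpair OTtriple (otWeight l) l := by
  intro x y hxy
  simp only [otWeight, Finset.sum_ite, Finset.sum_const, Finset.filter_filter,
    card_free_left_extensions x y hxy, card_confined_left_extensions x y hxy, nsmul_eq_mul]
  split_ifs <;> push_cast
  · linear_combination -hl
  · ring

open Asymptotics Filter in
theorem N8_isTheta_pow {l : ℝ} (hl : l ^ 2 - 5 * l - 5 = 0) (hl4 : 4 < l) :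
    (fun m => (N8 m : ℝ)) =Θ[atTop] fun m => l ^ m := by
  have hpos : ∀ x y, 0 < otWeight l x y := by
    intro x y
    unfold otWeight
    split_ifs <;> linarith
  have hcard := (isEigenweight_otWeight hl).card_avoids_isTheta (by positivity)
    (fun x y _ => hpos x y) ⟨0, 0, by decide⟩
  refine EventuallyEq.trans_isTheta ?_ hcard
  filter_upwards [eventually_ne_atTop 0] with m hm
  rw [N8_eq_card_avoids hm]

theorem isGreatest_capacity_root :
    IsGreatest {x : ℝ | x ^ 2 - 5 * x - 5 = 0} ((5 + 3 * Real.sqrt 5) / 2) := by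
  have hdiscrim : discrim (1 : ℝ) (-5) (-5) = 3 * Real.sqrt 5 * (3 * Real.sqrt 5) := by
    rw [discrim]
    linear_combination -9 * Real.mul_self_sqrt (show (0 : ℝ) ≤ 5 by norm_num)
  have hroots (x : ℝ) : x ^ 2 - 5 * x - 5 = 0 ↔
      x = (5 + 3 * Real.sqrt 5) / 2 ∨ x = (5 - 3 * Real.sqrt 5) / 2 := by
    convert quadratic_eq_zero_iff one_ne_zero hdiscrim x using 2 <;> ring_nf
  refine ⟨(hroots _).2 (.inl rfl), fun x hx => ?_⟩
  rcases (hroots x).1 hx with rfl | rfl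
  · rfl
  · linarith [Real.sqrt_nonneg 5]

theorem ot_capacity :
    Filter.Tendsto (fun m : ℕ => Real.logb 2 (N8 m) / (m : ℝ)) Filter.atTop
      (nhds (Real.logb 2 ((5 + 3 * Real.sqrt 5) / 2))) ∧
    ((5 + 3 * Real.sqrt 5) / 2) ^ 2 - 5 * ((5 + 3 * Real.sqrt 5) / 2) - 5 = 0 ∧
    (∀ x : ℝ, x ^ 2 - 5 * x - 5 = 0 → x ≤ (5 + 3 * Real.sqrt 5) / 2) := by
  have hroot := isGreatest_capacity_root.1
  have hsqrt : 1 < Real.sqrt 5 := Real.lt_sqrt_of_sq_lt (by norm_num)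
  exact ⟨tendsto_logb_div_of_isTheta_pow 2 (N8_isTheta_pow hroot (by linarith)), hroot,
    fun _ hx => isGreatest_capacity_root.2 hx⟩

end OTLOCO
end

section
/- The normalized finite-length rate of the ST-LOCO coding scheme converges to its normalized capacity: lim_{m→∞} (1/3)·( (⌊log₂ N4(m)⌋ + 2)/(m + 3) + 1 ) = (1 + log₂(1 + √2))/3. -/
namespace STLOCO

/-- Forbidden 2-tuples of `ST⁴`, read left-to-right. -/
def STpair (a b : Fin 4) : Prop :=
  (a = 0 ∧ b = 1) ∨ (a = 1 ∧ b = 0) ∨ (a = 1 ∧ b = 2) ∨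
  (a = 2 ∧ b = 1) ∨ (a = 2 ∧ b = 3) ∨ (a = 3 ∧ b = 2)

/-- Forbidden 3-tuples of `ST⁴`, read left-to-right. -/
def STtriple (a x b : Fin 4) : Prop :=
  (a = 0 ∧ x = 3 ∧ b = 0) ∨ (a = 3 ∧ x = 0 ∧ b = 3)

instance (a b : Fin 4) : Decidable (STpair a b) := by unfold STpair; infer_instance
instance (a x b : Fin 4) : Decidable (STtriple a x b) := by unfold STtriple; infer_instance

/-- A word `w : Fin m → Fin 4` (index `0` is the leftmost symbol) is ST-admissible. -/
def STadm {m : ℕ} (w : Fin m → Fin 4) : Prop :=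
  (∀ i j : Fin m, (j : ℕ) = (i : ℕ) + 1 → ¬ STpair (w i) (w j)) ∧
  (∀ i j k : Fin m, (j : ℕ) = (i : ℕ) + 1 → (k : ℕ) = (i : ℕ) + 2 →
    ¬ STtriple (w i) (w j) (w k))

instance {m : ℕ} : DecidablePred (@STadm m) := fun w => by
  unfold STadm; infer_instance

/-- Number of ST-admissible words of length `m`, with the convention `N4 0 = 2`. -/
def N4 (m : ℕ) : ℕ :=
  if m = 0 then 2
  else (Finset.univ.filter (fun w : Fin m → Fin 4 => STadm w)).card

/-!
Prepending one symbol to an admissible word of length at least two is possible in exactly two ways,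
except that a third symbol fits when the word starts with an extreme level that is compatible with
everything after it. Deleting that level identifies the exceptional words with all admissible words
of length one less, so `N4 (m + 2) = 2 * N4 (m + 1) + N4 m`, and the convention `N4 0 = 2` makes
this hold from `m = 0` on. Hence `N4 m` is of exact order `(1 + √2) ^ m`, the number `1 + √2` being
the positive root of `x ^ 2 = 2 * x + 1`. Then `⌊log₂ (N4 m)⌋` differs from `m * log₂ (1 + √2)` by a
bounded amount, which the denominator `m + 3` makes negligible.
-/

open Filter Asymptotics Topology Finset

theorem le_of_recurrence {R : Type*} [Semiring R] [PartialOrder R] [IsOrderedRing R]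
    {p q : R} (hp : 0 ≤ p) (hq : 0 ≤ q) {u v : ℕ → R}
    (hu : ∀ n, u (n + 2) ≤ p * u (n + 1) + q * u n)
    (hv : ∀ n, p * v (n + 1) + q * v n ≤ v (n + 2)) (h₀ : u 0 ≤ v 0) (h₁ : u 1 ≤ v 1) (n : ℕ) :
    u n ≤ v n := by
  induction n using Nat.twoStepInduction with
  | zero => exact h₀
  | one => exact h₁
  | more n ih ih' =>
    calc u (n + 2) ≤ p * u (n + 1) + q * u n := hu n
      _ ≤ p * v (n + 1) + q * v n := by gcongr
      _ ≤ v (n + 2) := hv n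

theorem isTheta_pow_of_recurrence {l : Filter ℕ} {p q r : ℝ} (hp : 0 ≤ p) (hq : 0 ≤ q)
    (hr : 0 < r) (hroot : r ^ 2 = p * r + q) {u : ℕ → ℝ}
    (hu : ∀ n, u (n + 2) = p * u (n + 1) + q * u n) (h₀ : 0 < u 0) (h₁ : 0 < u 1) :
    u =Θ[l] fun n => r ^ n := by
  have hpow (c : ℝ) (n : ℕ) : c * r ^ (n + 2) = p * (c * r ^ (n + 1)) + q * (c * r ^ n) := by
    linear_combination c * r ^ n * hroot
  set c := min (u 0) (u 1 / r)
  set C := max (u 0) (u 1 / r)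
  have hc : 0 < c := lt_min h₀ (div_pos h₁ hr)
  have lower (n : ℕ) : c * r ^ n ≤ u n :=
    le_of_recurrence (u := fun n => c * r ^ n) hp hq (fun n => (hpow c n).le) (fun n => (hu n).ge)
      (by rw [pow_zero, mul_one]; exact min_le_left _ _)
      (by rw [pow_one, ← le_div_iff₀ hr]; exact min_le_right _ _) n
  have upper (n : ℕ) : u n ≤ C * r ^ n :=
    le_of_recurrence (v := fun n => C * r ^ n) hp hq (fun n => (hu n).le) (fun n => (hpow C n).ge)
      (by rw [pow_zero, mul_one]; exact le_max_left _ _)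
      (by rw [pow_one, ← div_le_iff₀ hr]; exact le_max_right _ _) n
  have hu_nonneg (n : ℕ) : 0 ≤ u n := le_trans (by positivity) (lower n)
  refine ⟨.of_bound C (.of_forall fun n => ?_), .of_bound c⁻¹ (.of_forall fun n => ?_)⟩
  · rw [Real.norm_of_nonneg (hu_nonneg n), Real.norm_of_nonneg (by positivity)]
    exact upper n
  · rw [Real.norm_of_nonneg (hu_nonneg n), Real.norm_of_nonneg (by positivity),
      le_inv_mul_iff₀ hc]
    exact lower n

theorem isBigO_log_sub_log_of_isTheta {α : Type*} {l : Filter α} {f g : α → ℝ} (h : f =Θ[l] g) :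
    (fun x => Real.log (f x) - Real.log (g x)) =O[l] (1 : α → ℝ) := by
  obtain ⟨C, hC, hfg⟩ := h.1.exists_pos
  obtain ⟨D, hD, hgf⟩ := h.2.exists_pos
  refine .of_bound (max |Real.log C| |Real.log D|) ?_
  filter_upwards [hfg.bound, hgf.bound, h.eq_zero_iff] with x hf_le hg_le hzero
  obtain hg | hg := eq_or_ne (g x) 0
  · simp [hzero.2 hg, hg]
  have hf : f x ≠ 0 := mt hzero.1 hg
  have upper : Real.log (f x) ≤ Real.log C + Real.log (g x) := by
    rw [← Real.log_abs (f x), ← Real.log_abs (g x), ← Real.log_mul hC.ne' (abs_ne_zero.2 hg)]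
    exact Real.log_le_log (abs_pos.2 hf) hf_le
  have lower : Real.log (g x) ≤ Real.log D + Real.log (f x) := by
    rw [← Real.log_abs (f x), ← Real.log_abs (g x), ← Real.log_mul hD.ne' (abs_ne_zero.2 hf)]
    exact Real.log_le_log (abs_pos.2 hg) hg_le
  rw [Pi.one_apply, norm_one, mul_one, Real.norm_eq_abs, abs_sub_le_iff]
  exact ⟨le_max_of_le_left (by linarith [le_abs_self (Real.log C)]),
    le_max_of_le_right (by linarith [le_abs_self (Real.log D)])⟩

theorem isBigO_logb_sub_logb_of_isTheta {α : Type*} {l : Filter α} {f g : α → ℝ} (b : ℝ)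
    (h : f =Θ[l] g) :
    (fun x => Real.logb b (f x) - Real.logb b (g x)) =O[l] (1 : α → ℝ) := by
  simpa only [Real.logb, sub_div, div_eq_inv_mul, mul_sub] using
    (isBigO_log_sub_log_of_isTheta h).const_mul_left (Real.log b)⁻¹

theorem abs_natLog_sub_logb_le_one (b n : ℕ) : |(Nat.log b n : ℝ) - Real.logb b n| ≤ 1 := by
  have hlt := Nat.lt_floor_add_one (Real.logb b n)
  rw [Real.natFloor_logb_natCast] at hlt
  rw [abs_sub_le_iff]
  constructor <;> linarith [Real.natLog_le_logb n b]

theorem isBigO_natLog_sub_mul_logb {l : Filter ℕ} {u : ℕ → ℕ} {r : ℝ} (b : ℕ)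
    (h : (fun n => (u n : ℝ)) =Θ[l] fun n => r ^ n) :
    (fun n => (Nat.log b (u n) : ℝ) - n * Real.logb b r) =O[l] (1 : ℕ → ℝ) := by
  have hfloor : (fun n => (Nat.log b (u n) : ℝ) - Real.logb b (u n)) =O[l] (1 : ℕ → ℝ) :=
    .of_bound 1 (.of_forall fun n => by simpa using abs_natLog_sub_logb_le_one b (u n))
  simpa only [sub_add_sub_cancel, Real.logb_pow] using
    hfloor.add (isBigO_logb_sub_logb_of_isTheta b h)

theorem tendsto_add_div_add_of_isBigO_sub_mul {f : ℕ → ℝ} {L : ℝ}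
    (h : (fun n => f n - n * L) =O[atTop] (1 : ℕ → ℝ)) (a d : ℝ) :
    Tendsto (fun n : ℕ => (f n + a) / (n + d)) atTop (𝓝 L) := by
  have hd : Tendsto (fun n : ℕ => (n : ℝ) + d) atTop atTop :=
    tendsto_atTop_add_const_right _ _ tendsto_natCast_atTop_atTop
  have hsmall : (fun n : ℕ => f n - n * L + (a - d * L)) =o[atTop] fun n : ℕ => (n : ℝ) + d :=
    (h.add (isBigO_const_one ℝ _ _)).trans_isLittleO
      (isLittleO_one_left_iff ℝ |>.2 (tendsto_norm_atTop_atTop.comp hd))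
  have hlim := hsmall.tendsto_div_nhds_zero.const_add L
  rw [add_zero] at hlim
  refine hlim.congr' ?_
  filter_upwards [hd.eventually_ne_atTop 0] with n hn
  field_simp
  ring

theorem card_filter_fin_cons {α : Type*} [Fintype α] {n : ℕ} (p : (Fin (n + 1) → α) → Prop)
    [DecidablePred p] :
    #{w | p w} = ∑ v : Fin n → α, #{a | p (Fin.cons a v)} := by
  simp only [card_filter]
  rw [← (Fin.consEquiv fun _ => α).sum_comp, Fintype.sum_prod_type_right]
  rfl

-- The condition on `k` replaces the index `1`, which wraps around to `0` when `v` has length one.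
theorem stadm_cons_iff {m : ℕ} {a : Fin 4} {v : Fin (m + 1) → Fin 4} :
    STadm (Fin.cons a v : Fin (m + 2) → Fin 4) ↔
      ¬STpair a (v 0) ∧ (∀ k : Fin (m + 1), (k : ℕ) = 1 → ¬STtriple a (v 0) (v k)) ∧ STadm v := by
  constructor
  · rintro ⟨hpair, htriple⟩
    exact ⟨hpair 0 (Fin.succ 0) (by simp), fun k hk => htriple 0 (Fin.succ 0) k.succ (by simp)
      (by simp [hk]), fun i j hij => hpair i.succ j.succ (by simp [hij]),
      fun i j k hij hik => htriple i.succ j.succ k.succ (by simp [hij]) (by simp [hik])⟩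
  · rintro ⟨hheadPair, hheadTriple, hpair, htriple⟩
    refine ⟨fun i j hij => ?_, fun i j k hij hik => ?_⟩
    · obtain ⟨j, rfl⟩ := Fin.exists_succ_eq.2 (show j ≠ 0 by rintro rfl; simp at hij)
      induction i using Fin.cases with
      | zero =>
        obtain rfl : j = 0 := by simpa using hij
        exact hheadPair
      | succ i => exact hpair i j (by simpa using hij)
    · obtain ⟨j, rfl⟩ := Fin.exists_succ_eq.2 (show j ≠ 0 by rintro rfl; simp at hij)
      obtain ⟨k, rfl⟩ := Fin.exists_succ_eq.2 (show k ≠ 0 by rintro rfl; simp at hik)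
      induction i using Fin.cases with
      | zero =>
        obtain rfl : j = 0 := by simpa using hij
        exact hheadTriple k (by simpa using hik)
      | succ i => exact htriple i j k (by simpa using hij) (by simpa using hik)

theorem stadm_cons_iff_of_length_add_two {m : ℕ} {a : Fin 4} {v : Fin (m + 2) → Fin 4} :
    STadm (Fin.cons a v : Fin (m + 3) → Fin 4) ↔
      (¬STpair a (v 0) ∧ ¬STtriple a (v 0) (v 1)) ∧ STadm v := by
  have h : ∀ k : Fin (m + 2), (k : ℕ) = 1 ↔ k = 1 := fun k => by simp [Fin.ext_iff]
  simp only [stadm_cons_iff, h, forall_eq, and_assoc]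

/-- The extreme level (`0` or `3`) that may be put in front of every admissible word starting with
`b`. The resulting word has three admissible one-symbol extensions to the left, whereas every other
admissible word of length at least two has only two. -/
def extremePrefix (b : Fin 4) : Fin 4 := if b = 0 ∨ b = 2 then 0 else 3

theorem not_stpair_extremePrefix (b : Fin 4) : ¬STpair (extremePrefix b) b := by
  decide +revert

theorem not_sttriple_extremePrefix {b c : Fin 4} (h : ¬STpair b c) :
    ¬STtriple (extremePrefix b) b c := by
  decide +revert

theorem stadm_cons_extremePrefix_iff {m : ℕ} {v : Fin (m + 1) → Fin 4} :
    STadm (Fin.cons (extremePrefix (v 0)) v : Fin (m + 2) → Fin 4) ↔ STadm v := by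
  rw [stadm_cons_iff]
  refine ⟨fun h => h.2.2, fun h => ⟨not_stpair_extremePrefix _, fun k hk => ?_, h⟩⟩
  exact not_sttriple_extremePrefix (h.1 0 k (by simpa using hk))

theorem card_left_extensions {b c : Fin 4} (h : ¬STpair b c) :
    #{a | ¬STpair a b ∧ ¬STtriple a b c} = 2 + if b = extremePrefix c then 1 else 0 := by
  decide +revert

theorem N4_succ (m : ℕ) : N4 (m + 1) = #{w : Fin (m + 1) → Fin 4 | STadm w} :=
  if_neg m.succ_ne_zero

theorem card_stadm_extremePrefix (m : ℕ) :
    #{v : Fin (m + 2) → Fin 4 | STadm v ∧ v 0 = extremePrefix (v 1)} = N4 (m + 1) := by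
  have fiber (u : Fin (m + 1) → Fin 4) :
      #{a | STadm (Fin.cons a u : Fin (m + 2) → Fin 4) ∧ a = extremePrefix (u 0)} =
        if STadm u then 1 else 0 := by
    have h (a : Fin 4) : STadm (Fin.cons a u : Fin (m + 2) → Fin 4) ∧ a = extremePrefix (u 0) ↔
        STadm u ∧ a = extremePrefix (u 0) :=
      and_congr_left (by rintro rfl; exact stadm_cons_extremePrefix_iff)
    by_cases hu : STadm u <;> simp [h, hu, filter_eq']
  rw [card_filter_fin_cons, N4_succ, card_filter]
  exact sum_congr rfl fun u _ => fiber u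

theorem N4_add_two (m : ℕ) : N4 (m + 2) = 2 * N4 (m + 1) + N4 m := by
  obtain _ | m := m
  · decide
  have fiber (v : Fin (m + 2) → Fin 4) :
      #{a | STadm (Fin.cons a v : Fin (m + 3) → Fin 4)} =
        2 * (if STadm v then 1 else 0) +
          if STadm v ∧ v 0 = extremePrefix (v 1) then 1 else 0 := by
    simp only [stadm_cons_iff_of_length_add_two]
    by_cases hv : STadm v
    · simpa [hv] using card_left_extensions (hv.1 0 1 (by simp))
    · simp [hv]
  rw [N4_succ (m + 2), card_filter_fin_cons, sum_congr rfl fun v _ => fiber v, sum_add_distrib,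
    ← mul_sum, ← card_filter, ← card_filter, ← N4_succ, card_stadm_extremePrefix]

theorem N4_isTheta_pow : (fun m => (N4 m : ℝ)) =Θ[atTop] fun m => (1 + √2) ^ m := by
  have hroot : (1 + √2) ^ 2 = 2 * (1 + √2) + 1 := by
    linear_combination Real.sq_sqrt (zero_le_two (α := ℝ))
  refine isTheta_pow_of_recurrence zero_le_two zero_le_one (by positivity) hroot
    (fun m => ?_) ?_ ?_
  · rw [N4_add_two]
    push_cast
    ring
  · simp [N4]
  · simp [show N4 1 = 4 by decide]

theorem st_loco_normalized_rate_tendsto :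
    Filter.Tendsto
      (fun m : ℕ =>
        (1 / 3 : ℝ) * (((Nat.log 2 (N4 m) : ℝ) + 2) / ((m : ℝ) + 3) + 1))
      Filter.atTop
      (nhds ((1 + Real.logb 2 (1 + Real.sqrt 2)) / 3)) := by
  have hlog := isBigO_natLog_sub_mul_logb 2 N4_isTheta_pow
  have hrate := tendsto_add_div_add_of_isBigO_sub_mul hlog 2 3
  convert (hrate.add_const 1).const_mul (1 / 3 : ℝ) using 2
  push_cast
  ring

end STLOCO
end
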